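/- Let 𝒫 = (P, μ, σ) be an n-dimensional system and suppose u_i ∈ ℳ^{exp,1}(P) converges to u_∞ ∈ ℳ^{exp,1}(P) in L¹(P, μ). Then U_𝒫(u_∞) ≤ liminf_{i→∞} U_𝒫(u_i). If moreover there exist p > 1 and C > 0 with ∫_P u_i^p dμ ≤ C for all i and ∫_P u_∞^p dμ ≤ C, then S_𝒫(u_i) → S_𝒫(u_∞). -/

import Mathlib

open MeasureTheory Filter Topology
open scoped ENNReal NNReal

noncomputable section

abbrev Euc (n : ℕ) := EuclideanSpace ℝ (Fin n)

/-- A `[0,∞]`-valued function on a set `K ⊆ ℝⁿ` is convex if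
`u((1−t)x+ty) ≤ (1−t)u(x)+t·u(y)` in `[0,∞]` for all `x, y ∈ K` and `t ∈ [0,1]`. -/
def ConvexFnOn {n : ℕ} (K : Set (Euc n)) (u : Euc n → ℝ≥0∞) : Prop :=
  ∀ ⦃x⦄, x ∈ K → ∀ ⦃y⦄, y ∈ K → ∀ ⦃t : ℝ⦄, 0 ≤ t → t ≤ 1 →
    u ((1 - t) • x + t • y) ≤ ENNReal.ofReal (1 - t) * u x + ENNReal.ofReal t * u y

/-- A polytope: a compact set with nonempty interior which is a finite
intersection of closed half-spaces (cut out by nonzero affine functions). -/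
def IsPolytope {n : ℕ} (P : Set (Euc n)) : Prop :=
  IsCompact P ∧ (interior P).Nonempty ∧
    ∃ (m : ℕ) (L : Fin m → (Euc n →ᵃ[ℝ] ℝ)),
      (∀ k, L k ≠ 0) ∧ P = ⋂ k, {x | 0 ≤ L k x}

/-- `F` is a face of `P`: the intersection of `P` with the zero locus of a
nonzero affine function that is nonnegative on `P`. -/
def IsFaceOf {n : ℕ} (P F : Set (Euc n)) : Prop :=
  ∃ ℓ : Euc n →ᵃ[ℝ] ℝ, ℓ ≠ 0 ∧ (∀ y ∈ P, 0 ≤ ℓ y) ∧ F = {y ∈ P | ℓ y = 0}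

/-- A facet: a face spanning an affine subspace of dimension `n − 1`. -/
def IsFacetOf {n : ℕ} (P F : Set (Euc n)) : Prop :=
  IsFaceOf P F ∧ Module.finrank ℝ (vectorSpan ℝ F) + 1 = n

/-- A simple polytope: every vertex lies on exactly `n` facets. -/
def IsSimplePolytope {n : ℕ} (P : Set (Euc n)) : Prop :=
  IsPolytope P ∧ ∀ v : Euc n, IsFaceOf P {v} →
    {F : Set (Euc n) | IsFacetOf P F ∧ v ∈ F}.ncard = n

/-- An `n`-dimensional system `𝒫 = (P, μ, σ)`: a simple polytope `P ⊆ ℝⁿ`, a flat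
measure `μ` on `P` (a positive constant multiple of Lebesgue measure restricted
to `P`), and a flat measure `σ` on `∂P` (supported on the boundary and, on each
facet, a positive constant multiple of `(n−1)`-dimensional Hausdorff measure). -/
structure NSystem (n : ℕ) where
  P : Set (Euc n)
  μ : Measure (Euc n)
  σ : Measure (Euc n)
  simple : IsSimplePolytope P
  flat : ∃ c : ℝ, 0 < c ∧ μ = ENNReal.ofReal c • volume.restrict P
  bdry_supp : σ (frontier P)ᶜ = 0
  flat_bdry : ∀ F : Set (Euc n), IsFacetOf P F →
    ∃ c : ℝ, 0 < c ∧ σ.restrict F =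
      ENNReal.ofReal c • (Measure.hausdorffMeasure ((n : ℝ) - 1)).restrict F

/-- `y log y`, computed via the real value of `y ∈ [0,∞]`. -/
def xlogx (y : ℝ≥0∞) : ℝ := y.toReal * Real.log y.toReal

/-- `∫_A u log u dμ ∈ (−∞, ∞]`, as an extended real number. -/
def entOn {n : ℕ} (μ : Measure (Euc n)) (A : Set (Euc n)) (u : Euc n → ℝ≥0∞) : EReal :=
  ((∫⁻ x in A, ENNReal.ofReal (xlogx (u x)) ∂μ : ℝ≥0∞) : EReal)
    - ((∫⁻ x in A, ENNReal.ofReal (-(xlogx (u x))) ∂μ : ℝ≥0∞) : EReal)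

/-- `u : P → (0,∞]` is log-convex: `u((1−t)x+ty) ≤ u(x)^{1−t} u(y)^t`. -/
def LogConvexOn {n : ℕ} (P : Set (Euc n)) (u : Euc n → ℝ≥0∞) : Prop :=
  ∀ ⦃x⦄, x ∈ P → ∀ ⦃y⦄, y ∈ P → ∀ ⦃t : ℝ⦄, 0 ≤ t → t ≤ 1 →
    u ((1 - t) • x + t • y) ≤ u x ^ (1 - t) * u y ^ t

/-- `ℳ^{exp,p}(P)`: lower semi-continuous log-convex `u : P → (0,∞]` with
`∫_P u dμ = μ(P)` and `∫_P u^p dμ < ∞`. -/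
def MExp {n : ℕ} (S : NSystem n) (p : ℝ) : Set (Euc n → ℝ≥0∞) :=
  {u | LowerSemicontinuousOn u S.P ∧ (∀ x ∈ S.P, 0 < u x) ∧ LogConvexOn S.P u ∧
    (∫⁻ x in S.P, u x ∂S.μ) = S.μ S.P ∧ (∫⁻ x in S.P, u x ^ p ∂S.μ) < ⊤}

/-- The nonequilibrium entropy `S_𝒫(u) = −(1/μ(P)) ∫_P u log u dμ ∈ [−∞, 0]`. -/
def Spf {n : ℕ} (S : NSystem n) (u : Euc n → ℝ≥0∞) : EReal :=
  (((S.μ S.P).toReal⁻¹ : ℝ) : EReal) *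
    (((∫⁻ x in S.P, ENNReal.ofReal (-(xlogx (u x))) ∂S.μ : ℝ≥0∞) : EReal)
      - ((∫⁻ x in S.P, ENNReal.ofReal (xlogx (u x)) ∂S.μ : ℝ≥0∞) : EReal))

/-- The internal μ-energy `U_𝒫(u) = (1/μ(P)) ∫_{∂P} u dσ ∈ (0, ∞]`. -/
def Upf {n : ℕ} (S : NSystem n) (u : Euc n → ℝ≥0∞) : ℝ≥0∞ :=
  (S.μ S.P)⁻¹ * ∫⁻ x in frontier S.P, u x ∂S.σ

/-- The free μ-energy `F_𝒫(T,u) = U_𝒫(u) − T·S_𝒫(u)` if `S_𝒫(u) > −∞`, else `∞`. -/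
def Fpf {n : ℕ} (S : NSystem n) (T : ℝ) (u : Euc n → ℝ≥0∞) : EReal :=
  if Spf S u = ⊥ then ⊤ else (Upf S u : EReal) - (T : EReal) * Spf S u

/-- `u` is the μ-canonical distribution of temperature `T ≥ 0`: for `T > 0` the
minimizer of `F_𝒫(T,·)` on `ℳ^{exp,1}(P)`; for `T = 0` the minimizer of `U_𝒫`
maximizing `S_𝒫` among all minimizers of `U_𝒫`. -/
def IsCanonical {n : ℕ} (S : NSystem n) (T : ℝ) (u : Euc n → ℝ≥0∞) : Prop :=
  u ∈ MExp S 1 ∧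
  (0 < T → ∀ u' ∈ MExp S 1, Fpf S T u ≤ Fpf S T u') ∧
  (T = 0 → (∀ u' ∈ MExp S 1, Upf S u ≤ Upf S u') ∧
    ∀ u' ∈ MExp S 1, (∀ u'' ∈ MExp S 1, Upf S u' ≤ Upf S u'') → Spf S u' ≤ Spf S u)


/-! Convexity alone carries the energy estimate. After passing to a subsequence, `uᵢ → v` almost
everywhere. For `x ∈ P` and almost every `y ∈ P` this convergence also holds at the points
`(1 - t) x + t y`, for a sequence of `t` tending to `0`; there convexity gives
`v ((1 - t) x + t y) ≤ (1 - t) liminf uᵢ x + t v y`, and letting `t → 0`, lower semicontinuity of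
`v` yields `v x ≤ liminf uᵢ x` at every point of `P`, boundary points included. Fatou's lemma for
`σ` concludes. For the entropy, `y log y = o(y ^ p)` makes the functions `uᵢ log uᵢ` uniformly
integrable, and Vitali's theorem applies. -/

section AlmostEverywhereSubsequence

variable {α : Type*} [MeasurableSpace α] {μ : Measure α}

lemma tendsto_of_tendsto_tsub_add_tsub {ι : Type*} {l : Filter ι} {f : ι → ℝ≥0∞} {a : ℝ≥0∞}
    (h : Tendsto (fun i => (f i - a) + (a - f i)) l (𝓝 0)) : Tendsto f l (𝓝 a) := by
  have h_sub_right : Tendsto (fun i => f i - a) l (𝓝 0) :=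
    tendsto_of_tendsto_of_tendsto_of_le_of_le tendsto_const_nhds h (fun _ => zero_le)
      fun _ => le_self_add
  have h_sub_left : Tendsto (fun i => a - f i) l (𝓝 0) :=
    tendsto_of_tendsto_of_tendsto_of_le_of_le tendsto_const_nhds h (fun _ => zero_le)
      fun _ => le_add_self
  have h_lower : Tendsto (fun i => a - (a - f i)) l (𝓝 a) := by
    simpa using ENNReal.Tendsto.sub (tendsto_const_nhds (x := a)) h_sub_left
      (Or.inr ENNReal.zero_ne_top)
  have h_upper : Tendsto (fun i => f i - a + a) l (𝓝 a) := by
    simpa using h_sub_right.add (tendsto_const_nhds (x := a))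
  exact tendsto_of_tendsto_of_tendsto_of_le_of_le h_lower h_upper (fun _ => tsub_tsub_le)
    fun _ => le_tsub_add

lemma exists_seq_tendsto_ae_zero_of_tendsto_lintegral {f : ℕ → α → ℝ≥0∞}
    (hf : ∀ i, AEMeasurable (f i) μ) (h : Tendsto (fun i => ∫⁻ x, f i x ∂μ) atTop (𝓝 0)) :
    ∃ φ : ℕ → ℕ, StrictMono φ ∧ ∀ᵐ x ∂μ, Tendsto (fun k => f (φ k) x) atTop (𝓝 0) := by
  obtain ⟨φ, hφ, hφ_le⟩ : ∃ φ : ℕ → ℕ, StrictMono φ ∧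
      ∀ k, ∫⁻ x, f (φ k) x ∂μ < (2⁻¹ : ℝ≥0∞) ^ k :=
    extraction_forall_of_eventually fun k =>
      h.eventually_lt_const (ENNReal.pow_pos (by simp) k)
  refine ⟨φ, hφ, ?_⟩
  have h_tsum : ∫⁻ x, ∑' k, f (φ k) x ∂μ ≠ ⊤ := by
    rw [lintegral_tsum fun k => hf (φ k)]
    refine ne_top_of_le_ne_top ?_ (ENNReal.tsum_le_tsum fun k => (hφ_le k).le)
    simp [ENNReal.tsum_geometric]
  filter_upwards [ae_lt_top' (AEMeasurable.tsum fun k => hf (φ k)) h_tsum] with x hx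
  exact ENNReal.tendsto_atTop_zero_of_tsum_ne_top hx.ne

lemma exists_seq_tendsto_ae_of_tendsto_lintegral {u : ℕ → α → ℝ≥0∞} {v : α → ℝ≥0∞}
    (hu : ∀ i, AEMeasurable (u i) μ) (hv : AEMeasurable v μ)
    (h : Tendsto (fun i => ∫⁻ x, ((u i x - v x) + (v x - u i x)) ∂μ) atTop (𝓝 0)) :
    ∃ φ : ℕ → ℕ, StrictMono φ ∧ ∀ᵐ x ∂μ, Tendsto (fun k => u (φ k) x) atTop (𝓝 (v x)) := by
  obtain ⟨φ, hφ, hφ_ae⟩ := exists_seq_tendsto_ae_zero_of_tendsto_lintegral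
    (fun i => ((hu i).sub hv).add (hv.sub (hu i))) h
  exact ⟨φ, hφ, hφ_ae.mono fun x hx => tendsto_of_tendsto_tsub_add_tsub hx⟩

lemma tendstoInMeasure_comp_of_tendsto_lintegral {E : Type*} [PseudoEMetricSpace E]
    [IsFiniteMeasure μ] {u : ℕ → α → ℝ≥0∞} {v : α → ℝ≥0∞} {g : ℝ≥0∞ → E}
    (hu : ∀ i, AEMeasurable (u i) μ) (hv : AEMeasurable v μ)
    (hgu : ∀ i, AEStronglyMeasurable (fun x => g (u i x)) μ)
    (hg : ∀ᵐ x ∂μ, ContinuousAt g (v x))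
    (h : Tendsto (fun i => ∫⁻ x, ((u i x - v x) + (v x - u i x)) ∂μ) atTop (𝓝 0)) :
    TendstoInMeasure μ (fun i x => g (u i x)) atTop (fun x => g (v x)) := by
  refine (exists_seq_tendstoInMeasure_atTop_iff hgu).2 fun φ hφ => ?_
  obtain ⟨ψ, hψ, hψ_ae⟩ := exists_seq_tendsto_ae_of_tendsto_lintegral (fun i => hu (φ i)) hv
    (h.comp hφ.tendsto_atTop)
  refine ⟨ψ, hψ, ?_⟩
  filter_upwards [hψ_ae, hg] with x hx hgx using hgx.tendsto.comp hx

end AlmostEverywhereSubsequence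

section Convexity

lemma ennreal_geom_mean_le_arith_mean2_weighted (w₁ w₂ : ℝ≥0) (p₁ p₂ : ℝ≥0∞) (hw : w₁ + w₂ = 1) :
    p₁ ^ (w₁ : ℝ) * p₂ ^ (w₂ : ℝ) ≤ w₁ * p₁ + w₂ * p₂ := by
  rcases eq_or_ne w₁ 0 with rfl | hw₁
  · obtain rfl : w₂ = 1 := by simpa using hw
    simp
  rcases eq_or_ne w₂ 0 with rfl | hw₂
  · obtain rfl : w₁ = 1 := by simpa using hw
    simp
  induction p₁ with
  | top => simp [ENNReal.mul_top, hw₁]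
  | coe p₁ =>
    induction p₂ with
    | top => simp [ENNReal.mul_top, hw₂]
    | coe p₂ =>
      rw [← ENNReal.coe_rpow_of_nonneg _ w₁.coe_nonneg,
          ← ENNReal.coe_rpow_of_nonneg _ w₂.coe_nonneg]
      exact_mod_cast NNReal.geom_mean_le_arith_mean2_weighted w₁ w₂ p₁ p₂ hw

lemma LogConvexOn.convexFnOn {n : ℕ} {P : Set (Euc n)} {u : Euc n → ℝ≥0∞}
    (hu : LogConvexOn P u) : ConvexFnOn P u := by
  intro x hx y hy t ht0 ht1
  have h_weights : (1 - t).toNNReal + t.toNNReal = 1 := by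
    rw [← Real.toNNReal_add (sub_nonneg.2 ht1) ht0, sub_add_cancel, Real.toNNReal_one]
  have h_mean := ennreal_geom_mean_le_arith_mean2_weighted _ _ (u x) (u y) h_weights
  rw [Real.coe_toNNReal _ (sub_nonneg.2 ht1), Real.coe_toNNReal _ ht0] at h_mean
  exact (hu hx hy ht0 ht1).trans h_mean

lemma ae_restrict_segment_of_convex {E : Type*} [NormedAddCommGroup E] [NormedSpace ℝ E]
    [FiniteDimensional ℝ E] [MeasurableSpace E] [BorelSpace E] {μ : Measure E} [μ.IsAddHaarMeasure]
    {P : Set E} (hP : Convex ℝ P) {q : E → Prop} (hq : ∀ᵐ y ∂μ.restrict P, q y) {x : E}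
    (hx : x ∈ P) {t : ℝ} (ht0 : 0 < t) (ht1 : t ≤ 1) :
    ∀ᵐ y ∂μ.restrict P, q ((1 - t) • x + t • y) := by
  have h_qmp : Measure.QuasiMeasurePreserving (fun y : E => (1 - t) • x + t • y) μ μ :=
    (measurePreserving_add_left μ ((1 - t) • x)).quasiMeasurePreserving.comp
      (Measure.quasiMeasurePreserving_smul μ ht0.ne')
  rw [ae_restrict_iff'₀ (hP.nullMeasurableSet μ)] at hq ⊢
  filter_upwards [h_qmp.ae hq] with y hy hyP
  exact hy (hP hx hyP (sub_nonneg.2 ht1) ht0.le (sub_add_cancel 1 t))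

lemma le_of_lowerSemicontinuousWithinAt_of_tendsto {X ι γ : Type*} [TopologicalSpace X]
    [TopologicalSpace γ] [LinearOrder γ] [DenselyOrdered γ] [OrderClosedTopology γ] {l : Filter ι}
    [l.NeBot] {f : X → γ} {s : Set X} {x : X} {z : ι → X} {g : ι → γ} {b : γ}
    (hf : LowerSemicontinuousWithinAt f s x) (hz : Tendsto z l (𝓝[s] x))
    (hle : ∀ i, f (z i) ≤ g i) (hg : Tendsto g l (𝓝 b)) : f x ≤ b :=
  le_of_forall_lt_imp_le_of_dense fun c hc =>
    ge_of_tendsto hg <| (hz.eventually (hf c hc)).mono fun i hi => hi.le.trans (hle i)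

variable {n : ℕ} {P : Set (Euc n)} {v : Euc n → ℝ≥0∞} {x : Euc n}

lemma ConvexFnOn.le_liminf_of_tendsto_ae {ι : Type*} {l : Filter ι} {u : ι → Euc n → ℝ≥0∞}
    (hP : Convex ℝ P) (hu : ∀ i, ConvexFnOn P (u i)) (hv : LowerSemicontinuousWithinAt v P x)
    (hv_fin : ∃ᵐ y ∂volume.restrict P, v y ≠ ⊤)
    (huv : ∀ᵐ y ∂volume.restrict P, Tendsto (fun i => u i y) l (𝓝 (v y))) (hx : x ∈ P) :
    v x ≤ liminf (fun i => u i x) l := by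
  refine le_of_forall_gt_imp_ge_of_dense fun b hb => ?_
  have hub : ∃ᶠ i in l, u i x < b := frequently_lt_of_liminf_lt (by isBoundedDefault) hb
  let t : ℕ → ℝ := fun k => 1 / ((k : ℝ) + 1)
  have ht0 (k : ℕ) : 0 < t k := Nat.one_div_pos_of_nat
  have ht1 (k : ℕ) : t k ≤ 1 := by simpa [t] using Nat.one_div_le_one_div (α := ℝ) k.zero_le
  have ht : Tendsto t atTop (𝓝 0) := tendsto_one_div_add_atTop_nhds_zero_nat
  let z : Euc n → ℕ → Euc n := fun y k => (1 - t k) • x + t k • y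
  obtain ⟨y, hvy, hyP, huy, huz⟩ : ∃ y, v y ≠ ⊤ ∧ y ∈ P ∧
      Tendsto (fun i => u i y) l (𝓝 (v y)) ∧
        ∀ k, Tendsto (fun i => u i (z y k)) l (𝓝 (v (z y k))) :=
    (hv_fin.and_eventually <| (ae_restrict_mem₀ (hP.nullMeasurableSet volume)).and <| huv.and <|
      ae_all_iff.2 fun k => ae_restrict_segment_of_convex hP huv hx (ht0 k) (ht1 k)).exists
  have hzP (k : ℕ) : z y k ∈ P :=
    hP hx hyP (sub_nonneg.2 (ht1 k)) (ht0 k).le (sub_add_cancel 1 (t k))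
  have hz : Tendsto (z y) atTop (𝓝[P] x) := by
    refine tendsto_nhdsWithin_iff.2 ⟨?_, Eventually.of_forall hzP⟩
    simpa [z] using ((ht.const_sub 1).smul_const x).add (ht.smul_const y)
  have hvz (k : ℕ) : v (z y k) ≤ ENNReal.ofReal (1 - t k) * b + ENNReal.ofReal (t k) * v y := by
    refine le_of_tendsto_of_tendsto_of_frequently (huz k)
      (tendsto_const_nhds.add (ENNReal.Tendsto.const_mul huy (Or.inr ENNReal.ofReal_ne_top)))
      (hub.mono fun i hi => (hu i hx hyP (ht0 k).le (ht1 k)).trans ?_)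
    gcongr
  refine le_of_lowerSemicontinuousWithinAt_of_tendsto hv hz hvz ?_
  simpa using
    (ENNReal.Tendsto.mul_const (ENNReal.tendsto_ofReal (ht.const_sub 1)) (Or.inl (by simp))).add
      (ENNReal.Tendsto.mul_const (ENNReal.tendsto_ofReal ht) (Or.inr hvy))

lemma ConvexFnOn.le_liminf_of_tendsto_lintegral {μ : Measure (Euc n)} {u : ℕ → Euc n → ℝ≥0∞}
    (hP : Convex ℝ P) (hμ : volume.restrict P ≪ μ) (hu : ∀ i, ConvexFnOn P (u i))
    (hu_meas : ∀ i, AEMeasurable (u i) μ) (hv_meas : AEMeasurable v μ)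
    (hv : LowerSemicontinuousWithinAt v P x) (hv_fin : ∃ᵐ y ∂volume.restrict P, v y ≠ ⊤)
    (huv : Tendsto (fun i => ∫⁻ y, ((u i y - v y) + (v y - u i y)) ∂μ) atTop (𝓝 0))
    (hx : x ∈ P) : v x ≤ liminf (fun i => u i x) atTop := by
  refine le_of_forall_gt_imp_ge_of_dense fun b hb => ?_
  obtain ⟨φ, hφ, hφb⟩ : ∃ φ : ℕ → ℕ, StrictMono φ ∧ ∀ k, u (φ k) x < b :=
    extraction_of_frequently_atTop (frequently_lt_of_liminf_lt (by isBoundedDefault) hb)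
  obtain ⟨ψ, -, hψ⟩ := exists_seq_tendsto_ae_of_tendsto_lintegral (fun k => hu_meas (φ k)) hv_meas
    (huv.comp hφ.tendsto_atTop)
  calc v x ≤ liminf (fun k => u (φ (ψ k)) x) atTop :=
        ConvexFnOn.le_liminf_of_tendsto_ae hP (fun k => hu _) hv hv_fin (hμ.ae_le hψ) hx
    _ ≤ liminf (fun _ : ℕ => b) atTop :=
        liminf_le_liminf (Eventually.of_forall fun k => (hφb (ψ k)).le)
    _ = b := liminf_const b

end Convexity

section UniformIntegrability

variable {α ι E : Type*} [MeasurableSpace α] {μ : Measure α} [IsFiniteMeasure μ]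

/- The de la Vallée Poussin criterion: `w` plays the role of a superlinear function of `f`. -/
lemma uniformIntegrable_one_of_enorm_le_mul [NormedAddCommGroup E] {f : ι → α → E}
    {w : ι → α → ℝ≥0∞} {C : ℝ≥0∞} (hf : ∀ i, AEStronglyMeasurable (f i) μ) (hC : C ≠ ⊤)
    (hw : ∀ i, ∫⁻ x, w i x ∂μ ≤ C)
    (hfw : ∀ ε : ℝ≥0, 0 < ε → ∃ B : ℝ≥0, ∀ i x, B ≤ ‖f i x‖₊ → ‖f i x‖ₑ ≤ ε * w i x) :
    UniformIntegrable f 1 μ := by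
  refine uniformIntegrable_of le_rfl ENNReal.one_ne_top hf fun ε hε => ?_
  obtain ⟨δ, hδ, hδC⟩ := ENNReal.exists_nnreal_pos_mul_lt hC (ENNReal.ofReal_pos.2 hε).ne'
  obtain ⟨B, hB⟩ := hfw δ hδ
  refine ⟨B, fun i => ?_⟩
  calc eLpNorm ({x | B ≤ ‖f i x‖₊}.indicator (f i)) 1 μ
      = ∫⁻ x, {x | B ≤ ‖f i x‖₊}.indicator (fun x => ‖f i x‖ₑ) x ∂μ := by
        simp only [eLpNorm_one_eq_lintegral_enorm, enorm_indicator_eq_indicator_enorm]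
    _ ≤ ∫⁻ x, δ * w i x ∂μ :=
        lintegral_mono fun x => Set.indicator_apply_le' (fun hx => hB i x hx) fun _ => zero_le
    _ = δ * ∫⁻ x, w i x ∂μ := lintegral_const_mul' _ _ ENNReal.coe_ne_top
    _ ≤ δ * C := by gcongr; exact hw i
    _ ≤ ENNReal.ofReal ε := hδC.le

lemma measurable_xlogx : Measurable xlogx :=
  Real.continuous_mul_log.measurable.comp ENNReal.measurable_toReal

lemma continuousAt_xlogx {y : ℝ≥0∞} (hy : y ≠ ⊤) : ContinuousAt xlogx y :=
  Real.continuous_mul_log.continuousAt.comp (ENNReal.tendsto_toReal hy)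

lemma isLittleO_mul_log_rpow_atTop {p : ℝ} (hp : 1 < p) :
    (fun y : ℝ => y * Real.log y) =o[atTop] fun y => y ^ p := by
  refine ((Asymptotics.isBigO_refl (fun y : ℝ => y) atTop).mul_isLittleO
    (isLittleO_log_rpow_atTop (sub_pos.2 hp))).congr' .rfl ?_
  filter_upwards [eventually_gt_atTop 0] with y hy
  rw [Real.rpow_sub_one hy.ne', mul_div_cancel₀ _ hy.ne']

lemma exists_enorm_xlogx_le_mul_rpow {p : ℝ} (hp : 1 < p) {ε : ℝ≥0} (hε : 0 < ε) :
    ∃ B : ℝ≥0, ∀ y : ℝ≥0∞, B ≤ ‖xlogx y‖₊ → ‖xlogx y‖ₑ ≤ ε * y ^ p := by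
  obtain ⟨N, hN⟩ := eventually_atTop.1 ((isLittleO_mul_log_rpow_atTop hp).bound hε)
  obtain ⟨B, hB⟩ := (isCompact_Icc (a := (0 : ℝ)) (b := N)).exists_bound_of_continuousOn
    Real.continuous_mul_log.continuousOn
  refine ⟨B.toNNReal + 1, fun y hy => ?_⟩
  have hBy : B < ‖xlogx y‖ :=
    calc B ≤ B.toNNReal := Real.le_coe_toNNReal B
      _ < B.toNNReal + 1 := lt_add_one _
      _ ≤ ‖xlogx y‖ := by exact_mod_cast hy
  have hNy : N ≤ y.toReal := by
    by_contra! h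
    exact hBy.not_ge (hB y.toReal ⟨ENNReal.toReal_nonneg, h.le⟩)
  calc ‖xlogx y‖ₑ = ENNReal.ofReal ‖xlogx y‖ := (ofReal_norm _).symm
    _ ≤ ENNReal.ofReal (ε * ‖y.toReal ^ p‖) := ENNReal.ofReal_le_ofReal (hN _ hNy)
    _ = ε * ENNReal.ofReal (y ^ p).toReal := by
        rw [ENNReal.ofReal_mul ε.coe_nonneg, ENNReal.ofReal_coe_nnreal, ENNReal.toReal_rpow,
          Real.norm_of_nonneg ENNReal.toReal_nonneg]
    _ ≤ ε * y ^ p := by gcongr; exact ENNReal.ofReal_toReal_le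

lemma uniformIntegrable_xlogx {u : ι → α → ℝ≥0∞} (hu : ∀ i, AEMeasurable (u i) μ) {p : ℝ}
    (hp : 1 < p) {C : ℝ≥0∞} (hC : C ≠ ⊤) (hup : ∀ i, ∫⁻ x, u i x ^ p ∂μ ≤ C) :
    UniformIntegrable (fun i x => xlogx (u i x)) 1 μ :=
  uniformIntegrable_one_of_enorm_le_mul
    (fun i => (measurable_xlogx.comp_aemeasurable (hu i)).aestronglyMeasurable) hC hup
    fun _ hε => (exists_enorm_xlogx_le_mul_rpow hp hε).imp fun _ hB i x => hB (u i x)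

lemma tendsto_integral_of_uniformIntegrable_of_tendstoInMeasure [NormedAddCommGroup E]
    [NormedSpace ℝ E] {f : ℕ → α → E} {g : α → E} (hf : UniformIntegrable f 1 μ)
    (hfg : TendstoInMeasure μ f atTop g) :
    Tendsto (fun i => ∫ x, f i x ∂μ) atTop (𝓝 (∫ x, g x ∂μ)) := by
  have hg : MemLp g 1 μ := hf.memLp_of_tendstoInMeasure hfg
  exact tendsto_integral_of_L1' g hg.aestronglyMeasurable
    (Eventually.of_forall fun i => memLp_one_iff_integrable.1 (hf.memLp i))
    (tendsto_Lp_finite_of_tendstoInMeasure le_rfl ENNReal.one_ne_top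
      hf.aestronglyMeasurable hg hf.unifIntegrable hfg)

end UniformIntegrability

lemma IsPolytope.convex {n : ℕ} {P : Set (Euc n)} (hP : IsPolytope P) : Convex ℝ P := by
  obtain ⟨-, -, m, L, -, rfl⟩ := hP
  exact convex_iInter fun k => (convex_Ici (0 : ℝ)).affine_preimage (L k)

lemma aemeasurable_restrict_of_lowerSemicontinuousOn {X γ : Type*} [TopologicalSpace X]
    [MeasurableSpace X] [OpensMeasurableSpace X] [LinearOrder γ] [TopologicalSpace γ]
    [OrderTopology γ] [SecondCountableTopology γ] [MeasurableSpace γ] [BorelSpace γ]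
    {μ : Measure X} {s : Set X} {f : X → γ} (hf : LowerSemicontinuousOn f s)
    (hs : MeasurableSet s) : AEMeasurable f (μ.restrict s) :=
  aemeasurable_restrict_of_measurable_subtype hs (lowerSemicontinuous_restrict_iff.2 hf).measurable

namespace NSystem

variable {n : ℕ} (S : NSystem n)

lemma isClosed : IsClosed S.P := S.simple.1.1.isClosed

lemma convex : Convex ℝ S.P := S.simple.1.convex

lemma volume_ne_zero : volume S.P ≠ 0 :=
  (Measure.measure_pos_of_nonempty_interior volume S.simple.1.2.1).ne'

lemma volume_restrict_absolutelyContinuous : volume.restrict S.P ≪ S.μ.restrict S.P := by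
  obtain ⟨c, hc, hμ⟩ := S.flat
  rw [hμ, Measure.restrict_smul, Measure.restrict_restrict S.isClosed.measurableSet, Set.inter_self]
  exact Measure.absolutelyContinuous_smul (ENNReal.ofReal_pos.2 hc).ne'

lemma measure_ne_zero : S.μ S.P ≠ 0 := fun h =>
  S.volume_ne_zero <| by
    simpa using S.volume_restrict_absolutelyContinuous (s := S.P) (by simpa using h)

instance : IsFiniteMeasure S.μ := by
  obtain ⟨c, -, hμ⟩ := S.flat
  have : Fact (volume S.P < ⊤) := ⟨S.simple.1.1.measure_lt_top⟩
  rw [hμ]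
  exact Measure.smul_finite _ ENNReal.ofReal_ne_top

end NSystem

section Functionals

variable {n : ℕ} (S : NSystem n) {u : ℕ → Euc n → ℝ≥0∞} {v : Euc n → ℝ≥0∞}

lemma Upf_le_liminf_Upf (hu : ∀ i, LowerSemicontinuousOn (u i) S.P)
    (huv : ∀ x ∈ S.P, v x ≤ liminf (fun i => u i x) atTop) :
    Upf S v ≤ liminf (fun i => Upf S (u i)) atTop := by
  have h_sub : frontier S.P ⊆ S.P := S.isClosed.frontier_subset
  unfold Upf
  rw [ENNReal.liminf_const_mul_of_ne_top (ENNReal.inv_ne_top.2 S.measure_ne_zero)]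
  gcongr
  calc ∫⁻ x in frontier S.P, v x ∂S.σ
      ≤ ∫⁻ x in frontier S.P, liminf (fun i => u i x) atTop ∂S.σ :=
        setLIntegral_mono' isClosed_frontier.measurableSet fun x hx => huv x (h_sub hx)
    _ ≤ liminf (fun i => ∫⁻ x in frontier S.P, u i x ∂S.σ) atTop :=
        lintegral_liminf_le' fun i => aemeasurable_restrict_of_lowerSemicontinuousOn
          ((hu i).mono h_sub) isClosed_frontier.measurableSet

lemma Spf_eq_coe_of_integrable (hv : Integrable (fun x => xlogx (v x)) (S.μ.restrict S.P)) :
    Spf S v = (((S.μ S.P).toReal⁻¹ * -∫ x in S.P, xlogx (v x) ∂S.μ : ℝ) : EReal) := by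
  have h_neg : ∫⁻ x in S.P, ENNReal.ofReal (-xlogx (v x)) ∂S.μ ≠ ⊤ := hv.neg.lintegral_lt_top.ne
  rw [integral_eq_lintegral_pos_part_sub_lintegral_neg_part hv, neg_sub, EReal.coe_mul,
    EReal.coe_sub, EReal.coe_ennreal_toReal hv.lintegral_lt_top.ne,
    EReal.coe_ennreal_toReal h_neg]
  rfl

lemma tendsto_Spf (h_ui : UniformIntegrable (fun i x => xlogx (u i x)) 1 (S.μ.restrict S.P))
    (h_meas : TendstoInMeasure (S.μ.restrict S.P) (fun i x => xlogx (u i x)) atTop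
      fun x => xlogx (v x)) :
    Tendsto (fun i => Spf S (u i)) atTop (𝓝 (Spf S v)) := by
  simp only [Spf_eq_coe_of_integrable S (h_ui.integrable_of_tendstoInMeasure h_meas),
    fun i => Spf_eq_coe_of_integrable S (memLp_one_iff_integrable.1 (h_ui.memLp i))]
  exact (continuous_coe_real_ereal.tendsto _).comp <|
    (tendsto_integral_of_uniformIntegrable_of_tendstoInMeasure h_ui h_meas).neg.const_mul _

end Functionals

theorem semicontinuity_of_functionals_general {n : ℕ} (S : NSystem n) {u : ℕ → Euc n → ℝ≥0∞}
    {v : Euc n → ℝ≥0∞} (hu : ∀ i, LowerSemicontinuousOn (u i) S.P)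
    (hu_conv : ∀ i, ConvexFnOn S.P (u i)) (hv : LowerSemicontinuousOn v S.P)
    (hv_int : ∫⁻ x in S.P, v x ∂S.μ ≠ ⊤)
    (huv : Tendsto (fun i => ∫⁻ x in S.P, ((u i x - v x) + (v x - u i x)) ∂S.μ) atTop (𝓝 0)) :
    Upf S v ≤ liminf (fun i => Upf S (u i)) atTop ∧
      ∀ p : ℝ, 1 < p → ∀ C : ℝ≥0∞, C ≠ ⊤ → (∀ i, ∫⁻ x in S.P, u i x ^ p ∂S.μ ≤ C) →
        Tendsto (fun i => Spf S (u i)) atTop (𝓝 (Spf S v)) := by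
  have hu_meas (i : ℕ) : AEMeasurable (u i) (S.μ.restrict S.P) :=
    aemeasurable_restrict_of_lowerSemicontinuousOn (hu i) S.isClosed.measurableSet
  have hv_meas : AEMeasurable v (S.μ.restrict S.P) :=
    aemeasurable_restrict_of_lowerSemicontinuousOn hv S.isClosed.measurableSet
  have hv_fin : ∀ᵐ x ∂S.μ.restrict S.P, v x ≠ ⊤ :=
    (ae_lt_top' hv_meas hv_int).mono fun _ => LT.lt.ne
  have : NeBot (ae (volume.restrict S.P)) := by simpa [ae_neBot] using S.volume_ne_zero
  refine ⟨Upf_le_liminf_Upf S hu fun x hx => ?_, fun p hp C hC hup => tendsto_Spf S ?_ ?_⟩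
  · exact ConvexFnOn.le_liminf_of_tendsto_lintegral S.convex S.volume_restrict_absolutelyContinuous
      hu_conv hu_meas hv_meas (hv x hx)
      (hv_fin.filter_mono S.volume_restrict_absolutelyContinuous.ae_le).frequently huv hx
  · exact uniformIntegrable_xlogx hu_meas hp hC hup
  · exact tendstoInMeasure_comp_of_tendsto_lintegral hu_meas hv_meas
      (fun i => (measurable_xlogx.comp_aemeasurable (hu_meas i)).aestronglyMeasurable)
      (hv_fin.mono fun _ => continuousAt_xlogx) huv

/-- Semicontinuity of the functionals: if `uᵢ → u∞` in `L¹(P,μ)` within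
`ℳ^{exp,1}(P)`, then `U_𝒫(u∞) ≤ liminf U_𝒫(uᵢ)`; if moreover the `L^p`-norms of
`uᵢ, u∞` are bounded for some `p > 1`, then `S_𝒫(uᵢ) → S_𝒫(u∞)`. -/
theorem semicontinuity_of_functionals (n : ℕ) (S : NSystem n)
    (u : ℕ → Euc n → ℝ≥0∞) (uinf : Euc n → ℝ≥0∞)
    (hu : ∀ i, u i ∈ MExp S 1) (huinf : uinf ∈ MExp S 1)
    (hL1 : Tendsto (fun i => ∫⁻ x in S.P,
        ((u i x - uinf x) + (uinf x - u i x)) ∂S.μ) atTop (𝓝 0)) :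
    Upf S uinf ≤ Filter.liminf (fun i => Upf S (u i)) atTop ∧
    (∀ p : ℝ, 1 < p → ∀ C : ℝ, 0 < C →
      (∀ i, ∫⁻ x in S.P, u i x ^ p ∂S.μ ≤ ENNReal.ofReal C) →
      (∫⁻ x in S.P, uinf x ^ p ∂S.μ ≤ ENNReal.ofReal C) →
      Tendsto (fun i => Spf S (u i)) atTop (𝓝 (Spf S uinf))) := by
  obtain ⟨hU, hS⟩ := semicontinuity_of_functionals_general S (fun i => (hu i).1)
    (fun i => (hu i).2.2.1.convexFnOn) huinf.1 (by simpa using huinf.2.2.2.2.ne) hL1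
  exact ⟨hU, fun p hp C _ hC _ => hS p hp _ ENNReal.ofReal_ne_top hC⟩

end
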